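/- Let u ≥ 1, A ≥ 0, and let ρ : [0,1] → ℂ be continuous with |ρ(t) − ρ(s)| ≤ A |t − s|^{1/u} for all s, t ∈ [0,1]. For j ≥ 0 set ρ_j(t) := Σ_{μ=0}^{2^j − 1} 2^j ⟨h_{j,μ}, ρ⟩ h_{j,μ}(t). Then sup_{t ∈ [0,1)} |ρ_j(t)| ≤ A · 2^{−1/u} · 2^{−j/u} for every j, and the series Σ_{j=0}^∞ ρ_j(t) converges uniformly on [0,1) to ρ(t) − ∫₀¹ ρ(s) ds. -/

import Mathlib

/-- The Haar function `h_{j,μ}` on `[0,1]`: equal to `1` on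
`[2^{-j}μ, 2^{-j}(μ+1/2))`, to `-1` on `[2^{-j}(μ+1/2), 2^{-j}(μ+1))`, and `0`
elsewhere. -/
noncomputable def haarFn (j μ : ℕ) : ℝ → ℝ := fun t =>
  Set.indicator (Set.Ico ((μ : ℝ) / 2 ^ j) (((μ : ℝ) + 1 / 2) / 2 ^ j))
      (fun _ => (1 : ℝ)) t
  - Set.indicator (Set.Ico (((μ : ℝ) + 1 / 2) / 2 ^ j) (((μ : ℝ) + 1) / 2 ^ j))
      (fun _ => (1 : ℝ)) t

/-- The Haar coefficient `⟨h_{j,μ}, ρ⟩ = ∫₀¹ h_{j,μ}(t) ρ(t) dt`. -/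
noncomputable def haarCoeff (j μ : ℕ) (ρ : ℝ → ℂ) : ℂ :=
  ∫ t in (0:ℝ)..1, haarFn j μ t • ρ t

/-- The `j`-th Haar layer `ρ_j(t) = Σ_{μ=0}^{2^j-1} 2^j ⟨h_{j,μ}, ρ⟩ h_{j,μ}(t)`. -/
noncomputable def haarLayer (j : ℕ) (ρ : ℝ → ℂ) (t : ℝ) : ℂ :=
  ∑ μ ∈ Finset.range (2 ^ j), ((2 ^ j : ℂ) * haarCoeff j μ ρ) * ((haarFn j μ t : ℝ) : ℂ)

/-!
On `[0,1)` the layer `ρ_j` is the difference between the averages of `ρ` over the dyadic intervals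
of generations `j + 1` and `j` containing the point. The partial sums therefore telescope to the
generation-`N` average minus the mean of `ρ`, and these averages converge uniformly because `ρ` is
uniformly continuous. The two halves of a generation-`j` interval are translates of each other by
`2^{-(j+1)}`, so a Haar coefficient is controlled by the increments of `ρ` over that distance.
-/

open MeasureTheory Set Filter

theorem integrableOn_Ico_of_continuousOn_Icc {E : Type*} [NormedAddCommGroup E] {a b : ℝ}
    {ρ : ℝ → E} (hρ : ContinuousOn ρ (Icc a b)) : IntegrableOn ρ (Ico a b) :=
  hρ.integrableOn_Icc.mono_set Ico_subset_Icc_self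

/-- The half-open dyadic interval of generation `j` and index `m`, the support of `haarFn j m`. -/
def dyadicInterval (j m : ℕ) : Set ℝ := Ico ((m : ℝ) / 2 ^ j) (((m : ℝ) + 1) / 2 ^ j)

section DyadicInterval

variable {j m n : ℕ} {t : ℝ}

theorem mem_dyadicInterval_iff_floor (ht : 0 ≤ t) :
    t ∈ dyadicInterval j m ↔ ⌊(2 : ℝ) ^ j * t⌋₊ = m := by
  have hpow : (0 : ℝ) < 2 ^ j := by positivity
  rw [Nat.floor_eq_iff (by positivity), dyadicInterval, mem_Ico, div_le_iff₀' hpow,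
    lt_div_iff₀' hpow]

theorem nonneg_of_mem_dyadicInterval (ht : t ∈ dyadicInterval j m) : 0 ≤ t :=
  le_trans (by positivity) ht.1

theorem floor_eq_of_mem_dyadicInterval (ht : t ∈ dyadicInterval j m) :
    ⌊(2 : ℝ) ^ j * t⌋₊ = m :=
  (mem_dyadicInterval_iff_floor (nonneg_of_mem_dyadicInterval ht)).1 ht

theorem disjoint_dyadicInterval (h : m ≠ n) :
    Disjoint (dyadicInterval j m) (dyadicInterval j n) :=
  disjoint_left.2 fun _ hm hn =>
    h ((floor_eq_of_mem_dyadicInterval hm).symm.trans (floor_eq_of_mem_dyadicInterval hn))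

theorem exists_mem_dyadicInterval (j : ℕ) (ht : t ∈ Ico (0 : ℝ) 1) :
    ∃ m < 2 ^ j, t ∈ dyadicInterval j m := by
  have hpow : (0 : ℝ) < 2 ^ j := by positivity
  refine ⟨⌊(2 : ℝ) ^ j * t⌋₊, ?_, (mem_dyadicInterval_iff_floor ht.1).2 rfl⟩
  rw [Nat.floor_lt (mul_nonneg hpow.le ht.1)]
  exact_mod_cast mul_lt_of_lt_one_right hpow ht.2

theorem dyadicInterval_subset_Ico (hm : m < 2 ^ j) : dyadicInterval j m ⊆ Ico 0 1 := by
  refine Ico_subset_Ico (by positivity) ((div_le_one (by positivity)).2 ?_)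
  exact_mod_cast hm

theorem dyadicInterval_zero_zero : dyadicInterval 0 0 = Ico 0 1 := by
  simp [dyadicInterval]

theorem dyadicInterval_left_child (j m : ℕ) :
    dyadicInterval (j + 1) (2 * m) = Ico ((m : ℝ) / 2 ^ j) (((m : ℝ) + 1 / 2) / 2 ^ j) := by
  unfold dyadicInterval
  congr 1 <;> push_cast <;> field_simp <;> ring

theorem dyadicInterval_right_child (j m : ℕ) :
    dyadicInterval (j + 1) (2 * m + 1) =
      Ico (((m : ℝ) + 1 / 2) / 2 ^ j) (((m : ℝ) + 1) / 2 ^ j) := by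
  unfold dyadicInterval
  congr 1 <;> push_cast <;> field_simp <;> ring

theorem dyadicInterval_children_union (j m : ℕ) :
    dyadicInterval (j + 1) (2 * m) ∪ dyadicInterval (j + 1) (2 * m + 1) = dyadicInterval j m := by
  rw [dyadicInterval_left_child, dyadicInterval_right_child]
  exact Ico_union_Ico_eq_Ico (by gcongr; linarith) (by gcongr; linarith)

theorem dyadicInterval_left_child_subset (j m : ℕ) :
    dyadicInterval (j + 1) (2 * m) ⊆ dyadicInterval j m :=
  subset_union_left.trans (dyadicInterval_children_union j m).subset

theorem dyadicInterval_right_child_subset (j m : ℕ) :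
    dyadicInterval (j + 1) (2 * m + 1) ⊆ dyadicInterval j m :=
  subset_union_right.trans (dyadicInterval_children_union j m).subset

theorem preimage_add_const_dyadicInterval_succ (j m : ℕ) :
    (· + ((2 : ℝ) ^ j)⁻¹) ⁻¹' dyadicInterval j (m + 1) = dyadicInterval j m := by
  rw [dyadicInterval, preimage_add_const_Ico, dyadicInterval]
  congr 1 <;> push_cast <;> ring

theorem measurableSet_dyadicInterval (j m : ℕ) : MeasurableSet (dyadicInterval j m) :=
  measurableSet_Ico

theorem volume_dyadicInterval (j m : ℕ) :
    volume (dyadicInterval j m) = ENNReal.ofReal ((2 : ℝ) ^ j)⁻¹ := by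
  rw [dyadicInterval, Real.volume_Ico]
  congr 1
  ring

theorem measureReal_dyadicInterval (j m : ℕ) :
    volume.real (dyadicInterval j m) = ((2 : ℝ) ^ j)⁻¹ := by
  rw [Measure.real, volume_dyadicInterval, ENNReal.toReal_ofReal (by positivity)]

theorem dist_lt_of_mem_dyadicInterval {s : ℝ} (hs : s ∈ dyadicInterval j m)
    (ht : t ∈ dyadicInterval j m) : dist s t < ((2 : ℝ) ^ j)⁻¹ := by
  have hlength : ((m : ℝ) + 1) / 2 ^ j = (m : ℝ) / 2 ^ j + ((2 : ℝ) ^ j)⁻¹ := by ring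
  rw [dyadicInterval, hlength, mem_Ico] at hs ht
  rw [Real.dist_eq, abs_sub_lt_iff]
  constructor <;> linarith [hs.1, hs.2, ht.1, ht.2]

end DyadicInterval

section DyadicAverage

variable {E : Type*} [NormedAddCommGroup E] [NormedSpace ℝ E] {j m : ℕ} {t : ℝ} {ρ : ℝ → E}

/-- The average of `ρ` over the dyadic interval of generation `j` containing `t`, for `0 ≤ t`. As a
function of `t` it is the conditional expectation of `ρ` on the dyadic partition. -/
noncomputable def dyadicAverage (j : ℕ) (ρ : ℝ → E) (t : ℝ) : E :=
  ⨍ s in dyadicInterval j ⌊(2 : ℝ) ^ j * t⌋₊, ρ s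

theorem dyadicAverage_of_mem (ht : t ∈ dyadicInterval j m) :
    dyadicAverage j ρ t = ⨍ s in dyadicInterval j m, ρ s := by
  rw [dyadicAverage, floor_eq_of_mem_dyadicInterval ht]

theorem dyadicAverage_eq_smul_setIntegral (ht : t ∈ dyadicInterval j m) :
    dyadicAverage j ρ t = (2 : ℝ) ^ j • ∫ s in dyadicInterval j m, ρ s := by
  rw [dyadicAverage_of_mem ht, setAverage_eq, measureReal_dyadicInterval, inv_inv]

theorem dyadicAverage_zero (ht : t ∈ Ico (0 : ℝ) 1) :
    dyadicAverage 0 ρ t = ∫ s in (0 : ℝ)..1, ρ s := by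
  rw [← dyadicInterval_zero_zero] at ht
  rw [dyadicAverage_eq_smul_setIntegral ht, dyadicInterval_zero_zero, pow_zero, one_smul,
    integral_Ico_eq_integral_Ioc, intervalIntegral.integral_of_le zero_le_one]

theorem setIntegral_dyadicInterval_eq_add (hρ : IntegrableOn ρ (Ico 0 1)) (hm : m < 2 ^ j) :
    ∫ s in dyadicInterval j m, ρ s =
      (∫ s in dyadicInterval (j + 1) (2 * m), ρ s) +
        ∫ s in dyadicInterval (j + 1) (2 * m + 1), ρ s := by
  have hint := hρ.mono_set (dyadicInterval_subset_Ico hm)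
  rw [← dyadicInterval_children_union j m,
    setIntegral_union (disjoint_dyadicInterval (by omega)) (measurableSet_dyadicInterval _ _)
      (hint.mono_set (dyadicInterval_left_child_subset j m))
      (hint.mono_set (dyadicInterval_right_child_subset j m))]

theorem dist_dyadicAverage_le [CompleteSpace E] {ε : ℝ} (hρ : IntegrableOn ρ (Ico 0 1))
    (hm : m < 2 ^ j) (ht : t ∈ dyadicInterval j m)
    (hε : ∀ s ∈ dyadicInterval j m, dist (ρ s) (ρ t) ≤ ε) :
    dist (dyadicAverage j ρ t) (ρ t) ≤ ε := by
  rw [dyadicAverage_of_mem ht, ← Metric.mem_closedBall]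
  refine (convex_closedBall (ρ t) ε).set_average_mem Metric.isClosed_closedBall ?_ ?_
    (ae_restrict_of_forall_mem (measurableSet_dyadicInterval j m) hε)
    (hρ.mono_set (dyadicInterval_subset_Ico hm))
  · rw [volume_dyadicInterval]
    exact (ENNReal.ofReal_pos.2 (by positivity)).ne'
  · rw [volume_dyadicInterval]
    exact ENNReal.ofReal_ne_top

theorem tendstoUniformlyOn_dyadicAverage [CompleteSpace E] (hρ : ContinuousOn ρ (Icc 0 1)) :
    TendstoUniformlyOn (fun j => dyadicAverage j ρ) ρ atTop (Ico 0 1) := by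
  rw [Metric.tendstoUniformlyOn_iff]
  intro ε hε
  obtain ⟨δ, hδ, hclose⟩ := Metric.uniformContinuousOn_iff.1
    (isCompact_Icc.uniformContinuousOn_of_continuous hρ) (ε / 2) (half_pos hε)
  have hmesh : Tendsto (fun j : ℕ => ((2 : ℝ) ^ j)⁻¹) atTop (nhds 0) :=
    (tendsto_pow_atTop_atTop_of_one_lt one_lt_two).inv_tendsto_atTop
  filter_upwards [hmesh.eventually_lt_const hδ] with j hj t ht
  obtain ⟨m, hm, htm⟩ := exists_mem_dyadicInterval j ht
  rw [dist_comm]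
  refine (dist_dyadicAverage_le (integrableOn_Ico_of_continuousOn_Icc hρ) hm htm
    fun s hs => ?_).trans_lt (half_lt_self hε)
  exact (hclose s (Ico_subset_Icc_self (dyadicInterval_subset_Ico hm hs)) t
    (Ico_subset_Icc_self ht) ((dist_lt_of_mem_dyadicInterval hs htm).trans hj)).le

end DyadicAverage

section HaarLayer

variable {j m : ℕ} {t : ℝ} {ρ : ℝ → ℂ}

theorem haarFn_eq_indicator_sub_indicator (j m : ℕ) (t : ℝ) :
    haarFn j m t = (dyadicInterval (j + 1) (2 * m)).indicator 1 t -
      (dyadicInterval (j + 1) (2 * m + 1)).indicator 1 t := by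
  rw [dyadicInterval_left_child, dyadicInterval_right_child]
  rfl

theorem haarFn_of_mem_left (ht : t ∈ dyadicInterval (j + 1) (2 * m)) : haarFn j m t = 1 := by
  have hright : t ∉ dyadicInterval (j + 1) (2 * m + 1) :=
    (disjoint_dyadicInterval (by omega)).notMem_of_mem_left ht
  simp [haarFn_eq_indicator_sub_indicator, ht, hright]

theorem haarFn_of_mem_right (ht : t ∈ dyadicInterval (j + 1) (2 * m + 1)) :
    haarFn j m t = -1 := by
  have hleft : t ∉ dyadicInterval (j + 1) (2 * m) :=
    (disjoint_dyadicInterval (by omega)).notMem_of_mem_left ht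
  simp [haarFn_eq_indicator_sub_indicator, ht, hleft]

theorem haarFn_of_notMem (ht : t ∉ dyadicInterval j m) : haarFn j m t = 0 := by
  have hleft := notMem_subset (dyadicInterval_left_child_subset j m) ht
  have hright := notMem_subset (dyadicInterval_right_child_subset j m) ht
  simp [haarFn_eq_indicator_sub_indicator, hleft, hright]

theorem haarCoeff_eq_setIntegral_sub (hρ : IntegrableOn ρ (Ico 0 1)) (hm : m < 2 ^ j) :
    haarCoeff j m ρ = (∫ s in dyadicInterval (j + 1) (2 * m), ρ s) -
      ∫ s in dyadicInterval (j + 1) (2 * m + 1), ρ s := by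
  have hleft := (dyadicInterval_left_child_subset j m).trans (dyadicInterval_subset_Ico hm)
  have hright := (dyadicInterval_right_child_subset j m).trans (dyadicInterval_subset_Ico hm)
  have hsmul (s : ℝ) : haarFn j m s • ρ s = (dyadicInterval (j + 1) (2 * m)).indicator ρ s -
      (dyadicInterval (j + 1) (2 * m + 1)).indicator ρ s := by
    rw [haarFn_eq_indicator_sub_indicator, sub_smul, ← indicator_smul_apply_left,
      ← indicator_smul_apply_left]
    simp only [Pi.one_apply, one_smul]
  simp_rw [haarCoeff, hsmul]
  rw [intervalIntegral.integral_of_le zero_le_one, ← integral_Ico_eq_integral_Ioc,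
    integral_sub (hρ.indicator (measurableSet_dyadicInterval _ _))
      (hρ.indicator (measurableSet_dyadicInterval _ _)),
    setIntegral_indicator (measurableSet_dyadicInterval _ _),
    setIntegral_indicator (measurableSet_dyadicInterval _ _),
    inter_eq_right.2 hleft, inter_eq_right.2 hright]

theorem haarLayer_of_mem (hm : m < 2 ^ j) (ht : t ∈ dyadicInterval j m) :
    haarLayer j ρ t = 2 ^ j * haarCoeff j m ρ * haarFn j m t := by
  refine Finset.sum_eq_single_of_mem m (Finset.mem_range.2 hm) fun n _ hn => ?_
  rw [haarFn_of_notMem ((disjoint_dyadicInterval hn.symm).notMem_of_mem_left ht),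
    Complex.ofReal_zero, mul_zero]

theorem haarLayer_eq_dyadicAverage_sub (hρ : IntegrableOn ρ (Ico 0 1)) (j : ℕ)
    (ht : t ∈ Ico (0 : ℝ) 1) :
    haarLayer j ρ t = dyadicAverage (j + 1) ρ t - dyadicAverage j ρ t := by
  obtain ⟨m, hm, htm⟩ := exists_mem_dyadicInterval j ht
  rw [haarLayer_of_mem hm htm, haarCoeff_eq_setIntegral_sub hρ hm,
    dyadicAverage_eq_smul_setIntegral htm, setIntegral_dyadicInterval_eq_add hρ hm]
  rw [← dyadicInterval_children_union, mem_union] at htm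
  rcases htm with hleft | hright
  · rw [haarFn_of_mem_left hleft, dyadicAverage_eq_smul_setIntegral hleft]
    simp only [Complex.real_smul]
    push_cast
    ring
  · rw [haarFn_of_mem_right hright, dyadicAverage_eq_smul_setIntegral hright]
    simp only [Complex.real_smul]
    push_cast
    ring

theorem sum_range_haarLayer (hρ : IntegrableOn ρ (Ico 0 1)) (N : ℕ) (ht : t ∈ Ico (0 : ℝ) 1) :
    ∑ j ∈ Finset.range N, haarLayer j ρ t = dyadicAverage N ρ t - ∫ s in (0 : ℝ)..1, ρ s := by
  simp only [haarLayer_eq_dyadicAverage_sub hρ _ ht]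
  rw [Finset.sum_range_sub (fun j => dyadicAverage j ρ t), dyadicAverage_zero ht]

theorem tendstoUniformlyOn_sum_haarLayer (hρ : ContinuousOn ρ (Icc 0 1)) :
    TendstoUniformlyOn (fun N t => ∑ j ∈ Finset.range N, haarLayer j ρ t)
      (fun t => ρ t - ∫ s in (0 : ℝ)..1, ρ s) atTop (Ico 0 1) := by
  have hsub := (uniformContinuous_id.sub
    (uniformContinuous_const (b := ∫ s in (0 : ℝ)..1, ρ s))).comp_tendstoUniformlyOn
      (tendstoUniformlyOn_dyadicAverage hρ)
  exact hsub.congr (.of_forall fun N t ht =>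
    (sum_range_haarLayer (integrableOn_Ico_of_continuousOn_Icc hρ) N ht).symm)

theorem norm_haarCoeff_le {M : ℝ} (hρ : IntegrableOn ρ (Ico 0 1)) (hm : m < 2 ^ j)
    (hM : ∀ s ∈ dyadicInterval (j + 1) (2 * m), ‖ρ (s + ((2 : ℝ) ^ (j + 1))⁻¹) - ρ s‖ ≤ M) :
    ‖haarCoeff j m ρ‖ ≤ M * ((2 : ℝ) ^ (j + 1))⁻¹ := by
  have hshift := preimage_add_const_dyadicInterval_succ (j + 1) (2 * m)
  set d : ℝ := ((2 : ℝ) ^ (j + 1))⁻¹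
  set leftHalf := dyadicInterval (j + 1) (2 * m)
  set rightHalf := dyadicInterval (j + 1) (2 * m + 1)
  have hint := hρ.mono_set (dyadicInterval_subset_Ico hm)
  have hleft : IntegrableOn ρ leftHalf := hint.mono_set (dyadicInterval_left_child_subset j m)
  have hright : IntegrableOn ρ rightHalf := hint.mono_set (dyadicInterval_right_child_subset j m)
  have htranslate : MeasurePreserving (· + d) (volume : Measure ℝ) volume :=
    measurePreserving_add_right volume d
  have hemb : MeasurableEmbedding (fun s : ℝ => s + d) := measurableEmbedding_addRight d
  have hright_shifted : IntegrableOn (fun s => ρ (s + d)) leftHalf := by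
    rw [← hshift]
    exact (htranslate.integrableOn_comp_preimage hemb).2 hright
  have hright_integral : ∫ s in rightHalf, ρ s = ∫ s in leftHalf, ρ (s + d) := by
    rw [← hshift, htranslate.setIntegral_preimage_emb hemb]
  calc ‖haarCoeff j m ρ‖ = ‖∫ s in leftHalf, (ρ (s + d) - ρ s)‖ := by
        rw [haarCoeff_eq_setIntegral_sub hρ hm, hright_integral,
          integral_sub hright_shifted hleft, norm_sub_rev]
    _ ≤ M * volume.real leftHalf :=
        norm_setIntegral_le_of_norm_le_const
          (by rw [volume_dyadicInterval]; exact ENNReal.ofReal_lt_top) hM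
    _ = M * d := by rw [measureReal_dyadicInterval]

theorem norm_haarLayer_of_mem (hm : m < 2 ^ j) (ht : t ∈ dyadicInterval j m) :
    ‖haarLayer j ρ t‖ = 2 ^ j * ‖haarCoeff j m ρ‖ := by
  rw [haarLayer_of_mem hm ht]
  rw [← dyadicInterval_children_union, mem_union] at ht
  rcases ht with hleft | hright
  · simp [haarFn_of_mem_left hleft]
  · simp [haarFn_of_mem_right hright]

theorem norm_haarLayer_le {ω : ℝ → ℝ} (hρ : IntegrableOn ρ (Ico 0 1))
    (hω : ∀ s ∈ Icc (0 : ℝ) 1, ∀ t ∈ Icc (0 : ℝ) 1, ‖ρ t - ρ s‖ ≤ ω |t - s|) (j : ℕ)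
    (ht : t ∈ Ico (0 : ℝ) 1) :
    ‖haarLayer j ρ t‖ ≤ ω ((2 : ℝ) ^ (j + 1))⁻¹ / 2 := by
  obtain ⟨m, hm, htm⟩ := exists_mem_dyadicInterval j ht
  have hincrement : ∀ s ∈ dyadicInterval (j + 1) (2 * m),
      ‖ρ (s + ((2 : ℝ) ^ (j + 1))⁻¹) - ρ s‖ ≤ ω ((2 : ℝ) ^ (j + 1))⁻¹ := by
    intro s hs
    have hs_shift : s + ((2 : ℝ) ^ (j + 1))⁻¹ ∈ dyadicInterval (j + 1) (2 * m + 1) := by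
      rwa [← preimage_add_const_dyadicInterval_succ] at hs
    have hsubset := (dyadicInterval_subset_Ico hm).trans Ico_subset_Icc_self
    have hle := hω s (hsubset (dyadicInterval_left_child_subset j m hs)) _
      (hsubset (dyadicInterval_right_child_subset j m hs_shift))
    rwa [add_sub_cancel_left, abs_of_pos (by positivity)] at hle
  calc ‖haarLayer j ρ t‖ = 2 ^ j * ‖haarCoeff j m ρ‖ := norm_haarLayer_of_mem hm htm
    _ ≤ 2 ^ j * (ω ((2 : ℝ) ^ (j + 1))⁻¹ * ((2 : ℝ) ^ (j + 1))⁻¹) := by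
        gcongr
        exact norm_haarCoeff_le hρ hm hincrement
    _ = ω ((2 : ℝ) ^ (j + 1))⁻¹ / 2 := by
        generalize ω _ = M
        field_simp
        ring

end HaarLayer

theorem inv_pow_succ_rpow_one_div {b : ℝ} (hb : 0 < b) (j : ℕ) (u : ℝ) :
    ((b ^ (j + 1))⁻¹) ^ (1 / u) = b ^ (-(1 / u)) * b ^ (-(j : ℝ) / u) := by
  rw [← Real.rpow_natCast, ← Real.rpow_neg hb.le, ← Real.rpow_mul hb.le, ← Real.rpow_add hb]
  congr 1
  push_cast
  ring

theorem haar_stmt11_general {ρ : ℝ → ℂ} (hcont : ContinuousOn ρ (Icc 0 1)) :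
    (∀ ω : ℝ → ℝ,
      (∀ s ∈ Icc (0 : ℝ) 1, ∀ t ∈ Icc (0 : ℝ) 1, ‖ρ t - ρ s‖ ≤ ω |t - s|) →
        ∀ j : ℕ, ∀ t ∈ Ico (0 : ℝ) 1, ‖haarLayer j ρ t‖ ≤ ω ((2 : ℝ) ^ (j + 1))⁻¹ / 2) ∧
    TendstoUniformlyOn (fun N t => ∑ j ∈ Finset.range N, haarLayer j ρ t)
      (fun t => ρ t - ∫ s in (0 : ℝ)..1, ρ s) atTop (Ico 0 1) :=
  ⟨fun _ hω j _ ht => norm_haarLayer_le (integrableOn_Ico_of_continuousOn_Icc hcont) hω j ht,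
    tendstoUniformlyOn_sum_haarLayer hcont⟩

/-- If `ρ : [0,1] → ℂ` is continuous with `|ρ t - ρ s| ≤ A |t - s|^(1/u)` on
`[0,1]` (`u ≥ 1`, `A ≥ 0`), then `sup_{t ∈ [0,1)} |ρ_j t| ≤ A · 2^{-1/u} · 2^{-j/u}`
for every `j`, and `Σ_{j=0}^∞ ρ_j` converges uniformly on `[0,1)` to
`ρ - ∫₀¹ ρ(s) ds`. -/
theorem haar_stmt11 (u A : ℝ) (hu : 1 ≤ u) (hA : 0 ≤ A) (ρ : ℝ → ℂ)
    (hcont : ContinuousOn ρ (Set.Icc 0 1))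
    (hH : ∀ s ∈ Set.Icc (0:ℝ) 1, ∀ t ∈ Set.Icc (0:ℝ) 1,
      ‖ρ t - ρ s‖ ≤ A * |t - s| ^ (1 / u)) :
    (∀ j : ℕ, ∀ t ∈ Set.Ico (0:ℝ) 1,
      ‖haarLayer j ρ t‖ ≤ A * (2:ℝ) ^ (-(1 / u)) * (2:ℝ) ^ (-(j : ℝ) / u)) ∧
    TendstoUniformlyOn
      (fun N t => ∑ j ∈ Finset.range N, haarLayer j ρ t)
      (fun t => ρ t - ∫ s in (0:ℝ)..1, ρ s)
      Filter.atTop (Set.Ico 0 1) := by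
  obtain ⟨hbound, hlim⟩ := haar_stmt11_general hcont
  refine ⟨fun j t ht => ?_, hlim⟩
  rw [mul_assoc, ← inv_pow_succ_rpow_one_div two_pos]
  exact (hbound (fun d => A * d ^ (1 / u)) hH j t ht).trans (half_le_self (by positivity))
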